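/- arXiv:1511.01699 — 2 statements merged into one kernel-verified Lean document; each statement's English description precedes it below -/
import Mathlib

section
/- Let A_1,…,A_n ⊆ Fin d, U_1,…,U_k ⊆ Fin d, V_1,…,V_n ⊆ Fin k be as below. Let S_1,…,S_{2^k−1} be an enumeration of all nonempty subsets of Fin k such that n_{S_1} ≤ n_{S_2} ≤ … ≤ n_{S_{2^k−1}}. Let D assign to each nonempty S ⊆ Fin k a set D_S that is a column of A nearest to U_S, i.e., D_S = A_{j_S} for some index j_S with |D_S △ U_S| ≤ |A_j △ U_S| for all j. Suppose B_1,…,B_k ⊆ Fin d satisfy, for every ℓ ∈ [2^k−1]: U_{S_ℓ} △ (⋃_{i ∈ S_ℓ} B_i) ⊆ ⋃_{ℓ' ≥ ℓ} (U_{S_{ℓ'}} △ D_{S_{ℓ'}}). Then Σ_{j=1}^n |A_j △ (⋃_{i ∈ V_j} B_i)| ≤ 2^k · Σ_{j=1}^n |A_j △ U_{V_j}|. -/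
/-!
Write `m_T = |D_T ∆ U_T|`. By the triangle inequality, column `j` costs at most
`|A_j ∆ U_{V_j}| + |U_{V_j} ∆ B_{V_j}|`, where `B_T` is the union of the `B_i` with `i ∈ T`; the
first terms add up to the error `OPT` of `(U, V)`. Columns with `V_j = ∅` contribute nothing to the
second terms, so `sum_coeff_eq_sum_nS` and the containment hypothesis bound their total by
`∑_ℓ n_{S_ℓ} ∑_{ℓ' ≥ ℓ} m_{S_ℓ'}`. The ordering replaces `n_{S_ℓ}` by `n_{S_ℓ'}`, which gives at most
`(2^k - 1) ∑_ℓ' n_{S_ℓ'} m_{S_ℓ'}`. Since `D_T` is a nearest column to `U_T`, each column with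
`V_j = T` has error at least `m_T`, so the last sum is at most `OPT`.
-/

open Finset
open scoped symmDiff

/-- Boolean "product" of basis sets: `U_S = ⋃_{i ∈ S} U_i`. -/
def US {d k : ℕ} (U : Fin k → Finset (Fin d)) (S : Finset (Fin k)) : Finset (Fin d) :=
  S.biUnion U

/-- `n_S`: the number of coefficient sets equal to `S`. -/
def nS {n k : ℕ} (V : Fin n → Finset (Fin k)) (S : Finset (Fin k)) : ℕ :=
  (Finset.univ.filter fun j => V j = S).card

/-- A sum over columns of a function of the coefficient set, regrouped by the value of that set.
The empty coefficient set is not enumerated by `S`, hence the hypothesis `f ∅ = 0`. -/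
theorem sum_coeff_eq_sum_nS {n k : ℕ} (V : Fin n → Finset (Fin k))
    (S : Fin (2 ^ k - 1) → Finset (Fin k))
    (hSinj : Function.Injective S)
    (hSne : ∀ ℓ, (S ℓ).Nonempty)
    (hSsurj : ∀ T : Finset (Fin k), T.Nonempty → ∃ ℓ, S ℓ = T)
    (f : Finset (Fin k) → ℕ) (hf : f ∅ = 0) :
    ∑ j, f (V j) = ∑ ℓ, nS V (S ℓ) * f (S ℓ) := by
  have h1 : ∀ j, f (V j) = ∑ ℓ, if V j = S ℓ then f (S ℓ) else 0 := by
    intro j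
    rcases (V j).eq_empty_or_nonempty with h | h
    · rw [h, hf]
      symm
      apply Finset.sum_eq_zero
      intro ℓ _
      rw [if_neg (hSne ℓ).ne_empty.symm]
    · obtain ⟨ℓ, hℓ⟩ := hSsurj _ h
      rw [← hℓ]
      simp [hSinj.eq_iff]
  rw [Finset.sum_congr rfl fun j _ => h1 j, Finset.sum_comm]
  refine Finset.sum_congr rfl fun ℓ _ => ?_
  rw [← Finset.sum_filter, Finset.sum_const, smul_eq_mul, nS]

/-- If `B_1,…,B_k` satisfy the key containment
`U_{S_ℓ} △ ⋃_{i ∈ S_ℓ} B_i ⊆ ⋃_{ℓ' ≥ ℓ} (U_{S_{ℓ'}} △ D_{S_{ℓ'}})` for every `ℓ`,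
then the basis `B_1,…,B_k` achieves approximation ratio `2^k`. -/
theorem gcss_ratio_of_decomposition (d n k : ℕ)
    (A : Fin n → Finset (Fin d)) (U : Fin k → Finset (Fin d))
    (V : Fin n → Finset (Fin k))
    (S : Fin (2 ^ k - 1) → Finset (Fin k))
    (hSinj : Function.Injective S)
    (hSne : ∀ ℓ, (S ℓ).Nonempty)
    (hSsurj : ∀ T : Finset (Fin k), T.Nonempty → ∃ ℓ, S ℓ = T)
    (hSsort : ∀ ℓ ℓ' : Fin (2 ^ k - 1), ℓ ≤ ℓ' → nS V (S ℓ) ≤ nS V (S ℓ'))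
    (D : Finset (Fin k) → Finset (Fin d))
    (hD : ∀ T : Finset (Fin k), T.Nonempty →
      ∃ jT : Fin n, D T = A jT ∧
        ∀ j : Fin n, (D T ∆ US U T).card ≤ (A j ∆ US U T).card)
    (B : Fin k → Finset (Fin d))
    (hB : ∀ ℓ : Fin (2 ^ k - 1),
      US U (S ℓ) ∆ (S ℓ).biUnion B ⊆
        (Finset.univ.filter fun ℓ' : Fin (2 ^ k - 1) => ℓ ≤ ℓ').biUnion
          fun ℓ' => US U (S ℓ') ∆ D (S ℓ')) :
    ∑ j : Fin n, (A j ∆ (V j).biUnion B).card ≤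
      2 ^ k * ∑ j : Fin n, (A j ∆ US U (V j)).card := by
  have hsum := sum_coeff_eq_sum_nS V S hSinj hSne hSsurj
  have htri : ∀ j, (A j ∆ (V j).biUnion B).card ≤
      (A j ∆ US U (V j)).card + (US U (V j) ∆ (V j).biUnion B).card := fun j =>
    (Finset.card_le_card (symmDiff_triangle _ (US U (V j)) _)).trans (Finset.card_union_le _ _)
  have hnear : ∑ ℓ, nS V (S ℓ) * (D (S ℓ) ∆ US U (S ℓ)).card ≤
      ∑ j, (A j ∆ US U (V j)).card := by
    have h := hsum (fun T => if T = ∅ then 0 else (D T ∆ US U T).card) (by simp)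
    simp only [(hSne _).ne_empty, if_false] at h
    rw [← h]
    refine Finset.sum_le_sum fun j _ => ?_
    split_ifs with hj
    · exact Nat.zero_le _
    · obtain ⟨_, _, h2⟩ := hD (V j) (Finset.nonempty_iff_ne_empty.mpr hj)
      exact h2 j
  have hterm : ∀ ℓ, nS V (S ℓ) * (US U (S ℓ) ∆ (S ℓ).biUnion B).card ≤
      ∑ ℓ', nS V (S ℓ') * (D (S ℓ') ∆ US U (S ℓ')).card := by
    intro ℓ
    calc nS V (S ℓ) * (US U (S ℓ) ∆ (S ℓ).biUnion B).card
        ≤ nS V (S ℓ) * ∑ ℓ' with ℓ ≤ ℓ', (US U (S ℓ') ∆ D (S ℓ')).card :=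
          Nat.mul_le_mul_left _ ((Finset.card_le_card (hB ℓ)).trans Finset.card_biUnion_le)
      _ = ∑ ℓ' with ℓ ≤ ℓ', nS V (S ℓ) * (D (S ℓ') ∆ US U (S ℓ')).card := by
          rw [Finset.mul_sum]
          exact Finset.sum_congr rfl fun ℓ' _ => by rw [symmDiff_comm]
      _ ≤ ∑ ℓ' with ℓ ≤ ℓ', nS V (S ℓ') * (D (S ℓ') ∆ US U (S ℓ')).card :=
          Finset.sum_le_sum fun ℓ' h =>
            Nat.mul_le_mul_right _ (hSsort ℓ ℓ' (Finset.mem_filter.mp h).2)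
      _ ≤ ∑ ℓ', nS V (S ℓ') * (D (S ℓ') ∆ US U (S ℓ')).card :=
          Finset.sum_le_sum_of_subset (Finset.filter_subset _ _)
  have hpow : 2 ^ k = 1 + (2 ^ k - 1) := by
    have := Nat.one_le_two_pow (n := k)
    omega
  calc ∑ j, (A j ∆ (V j).biUnion B).card
      ≤ ∑ j, (A j ∆ US U (V j)).card + ∑ j, (US U (V j) ∆ (V j).biUnion B).card := by
        rw [← Finset.sum_add_distrib]
        exact Finset.sum_le_sum fun j _ => htri j
    _ = ∑ j, (A j ∆ US U (V j)).card +
          ∑ ℓ, nS V (S ℓ) * (US U (S ℓ) ∆ (S ℓ).biUnion B).card := by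
        rw [hsum (fun T => (US U T ∆ T.biUnion B).card) (by simp [US])]
    _ ≤ ∑ j, (A j ∆ US U (V j)).card +
          ∑ _ℓ : Fin (2 ^ k - 1), ∑ j, (A j ∆ US U (V j)).card :=
        Nat.add_le_add_left (Finset.sum_le_sum fun ℓ _ => (hterm ℓ).trans hnear) _
    _ = (1 + (2 ^ k - 1)) * ∑ j, (A j ∆ US U (V j)).card := by
        rw [Finset.sum_const, Finset.card_univ, Fintype.card_fin, smul_eq_mul, add_mul, one_mul]
    _ = 2 ^ k * ∑ j, (A j ∆ US U (V j)).card := by rw [← hpow]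
end

section
/- Let S_1,…,S_{2^k−1} be an enumeration of all nonempty subsets of Fin k, let D assign to each nonempty S ⊆ Fin k a set D_S ⊆ Fin d, and define E^ℓ_i := ⋂_{ℓ' ≥ ℓ with i ∈ S_{ℓ'}} D_{S_{ℓ'}}; for ℓ₁ < ℓ₂ with i ∈ S_{ℓ₁} ∩ S_{ℓ₂}, F_i^{ℓ₁,ℓ₂} := E_i^{ℓ₁+1} \ (⋃_{i' ∈ S_{ℓ₂}} E^{ℓ₁}_{i'}); and B_i := E_i^1 ∪ ⋃_{ℓ₁ < ℓ₂ with i ∈ S_{ℓ₁} ∩ S_{ℓ₂}} F_i^{ℓ₁,ℓ₂}. Then for every ℓ ∈ [2^k−1]: ⋃_{i ∈ S_ℓ} B_i = (⋃_{i ∈ S_ℓ} E^ℓ_i) ∪ (⋃_{i ∈ S_ℓ} ⋃_{ℓ ≤ ℓ₁ < ℓ₂ with i ∈ S_{ℓ₁} ∩ S_{ℓ₂}} F_i^{ℓ₁,ℓ₂}). -/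
/-!
The sets `E_i^m` increase with `m`, and `E_i^m = E_i^{m+1}` when `i ∉ S_m`.

For `⊆`: `E_i^0 ⊆ E_i^ℓ`, and if `ℓ₁ < ℓ` then `F_i^{ℓ₁,ℓ₂} ⊆ E_i^{ℓ₁+1} ⊆ E_i^ℓ`.

For `⊇`: let `x ∈ ⋃_{i ∈ S_ℓ} E_i^ℓ` and lower the upper index from `ℓ` as long as `x` stays in
`⋃_{i ∈ S_ℓ} E_i^m`. Either `m = 0` is reached, so `x ∈ E_i^0 ⊆ B_i` for some `i ∈ S_ℓ`, or some
step from `m + 1` to `m` fails. In that case `x ∈ E_i^{m+1}` for some `i ∈ S_ℓ`, while `x` lies in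
no `E_{i'}^m` with `i' ∈ S_ℓ`; hence `i ∈ S_m` and `x ∈ F_i^{m,ℓ} ⊆ B_i`. The descent is
`exists_mem_Bset`.
-/

open Finset

/-- `E^ℓ_i := ⋂_{ℓ' ≥ ℓ, i ∈ S_{ℓ'}} D_{S_{ℓ'}}` (with `ℓ` ranging over `ℕ`, the
enumeration being 0-indexed). -/
def Eset {d k : ℕ} (S : Fin (2 ^ k - 1) → Finset (Fin k))
    (D : Finset (Fin k) → Finset (Fin d)) (i : Fin k) (m : ℕ) : Finset (Fin d) :=
  (Finset.univ.filter fun ℓ' : Fin (2 ^ k - 1) => m ≤ (ℓ' : ℕ) ∧ i ∈ S ℓ').inf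
    fun ℓ' => D (S ℓ')

/-- `F_i^{ℓ₁,ℓ₂} := E_i^{ℓ₁+1} \ ⋃_{i' ∈ S_{ℓ₂}} E^{ℓ₁}_{i'}`. -/
def Fset {d k : ℕ} (S : Fin (2 ^ k - 1) → Finset (Fin k))
    (D : Finset (Fin k) → Finset (Fin d)) (i : Fin k)
    (ℓ₁ ℓ₂ : Fin (2 ^ k - 1)) : Finset (Fin d) :=
  Eset S D i ((ℓ₁ : ℕ) + 1) \ (S ℓ₂).biUnion fun i' => Eset S D i' (ℓ₁ : ℕ)

/-- `B_i := E_i^1 ∪ ⋃_{ℓ₁ < ℓ₂, i ∈ S_{ℓ₁} ∩ S_{ℓ₂}} F_i^{ℓ₁,ℓ₂}`. -/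
def Bset {d k : ℕ} (S : Fin (2 ^ k - 1) → Finset (Fin k))
    (D : Finset (Fin k) → Finset (Fin d)) (i : Fin k) : Finset (Fin d) :=
  Eset S D i 0 ∪
    (Finset.univ.filter fun p : Fin (2 ^ k - 1) × Fin (2 ^ k - 1) =>
        p.1 < p.2 ∧ i ∈ S p.1 ∧ i ∈ S p.2).biUnion
      fun p => Fset S D i p.1 p.2

lemma mem_Eset {d k : ℕ} {S : Fin (2 ^ k - 1) → Finset (Fin k)}
    {D : Finset (Fin k) → Finset (Fin d)} {i : Fin k} {m : ℕ} {x : Fin d} :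
    x ∈ Eset S D i m ↔ ∀ ℓ' : Fin (2 ^ k - 1), m ≤ (ℓ' : ℕ) → i ∈ S ℓ' → x ∈ D (S ℓ') := by
  simp [Eset, Finset.mem_inf]

lemma Eset_mono {d k : ℕ} (S : Fin (2 ^ k - 1) → Finset (Fin k))
    (D : Finset (Fin k) → Finset (Fin d)) (i : Fin k) : Monotone (Eset S D i) := by
  intro m n hmn x hx
  rw [mem_Eset] at hx ⊢
  exact fun ℓ' h => hx ℓ' (hmn.trans h)

lemma Eset_succ_of_notMem {d k : ℕ} {S : Fin (2 ^ k - 1) → Finset (Fin k)}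
    {D : Finset (Fin k) → Finset (Fin d)} {i : Fin k} {m : Fin (2 ^ k - 1)} (hi : i ∉ S m) :
    Eset S D i ((m : ℕ) + 1) = Eset S D i m := by
  refine Subset.antisymm (fun x hx => ?_) (Eset_mono S D i (Nat.le_succ _))
  rw [mem_Eset] at hx ⊢
  intro ℓ' h hi'
  have hne : (m : ℕ) ≠ ℓ' := fun h => hi (Fin.ext h ▸ hi')
  exact hx ℓ' (by omega) hi'

lemma mem_Bset {d k : ℕ} {S : Fin (2 ^ k - 1) → Finset (Fin k)}
    {D : Finset (Fin k) → Finset (Fin d)} {i : Fin k} {x : Fin d} :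
    x ∈ Bset S D i ↔ x ∈ Eset S D i 0 ∨
      ∃ ℓ₁ ℓ₂, (ℓ₁ < ℓ₂ ∧ i ∈ S ℓ₁ ∧ i ∈ S ℓ₂) ∧ x ∈ Fset S D i ℓ₁ ℓ₂ := by
  simp [Bset]

/-- The descent: a point of `⋃_{i ∈ S_ℓ} E_i^m` with `m ≤ ℓ` lies in `⋃_{i ∈ S_ℓ} B_i`, by
induction on `m`. The index `i` may change from one step to the next. -/
lemma exists_mem_Bset {d k : ℕ} {S : Fin (2 ^ k - 1) → Finset (Fin k)}
    {D : Finset (Fin k) → Finset (Fin d)} {ℓ : Fin (2 ^ k - 1)} {x : Fin d} {m : ℕ}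
    (hm : m ≤ (ℓ : ℕ)) (h : ∃ i ∈ S ℓ, x ∈ Eset S D i m) : ∃ i ∈ S ℓ, x ∈ Bset S D i := by
  induction m with
  | zero =>
    obtain ⟨i, hi, hx⟩ := h
    exact ⟨i, hi, mem_Bset.2 (Or.inl hx)⟩
  | succ m ih =>
    by_cases hd : ∃ i ∈ S ℓ, x ∈ Eset S D i m
    · exact ih (by omega) hd
    obtain ⟨i, hi, hx⟩ := h
    let m' : Fin (2 ^ k - 1) := ⟨m, by omega⟩
    have him : i ∈ S m' := by
      by_contra hn
      exact hd ⟨i, hi, (Eset_succ_of_notMem (D := D) hn) ▸ hx⟩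
    refine ⟨i, hi, mem_Bset.2 (Or.inr ⟨m', ℓ, ⟨Fin.lt_def.2 hm, him, hi⟩, ?_⟩)⟩
    refine mem_sdiff.2 ⟨hx, fun hu => hd ?_⟩
    simpa using hu

/-- `⋃_{i ∈ S_ℓ} B_i = (⋃_{i ∈ S_ℓ} E_i^ℓ) ∪
  (⋃_{i ∈ S_ℓ} ⋃_{ℓ ≤ ℓ₁ < ℓ₂, i ∈ S_{ℓ₁} ∩ S_{ℓ₂}} F_i^{ℓ₁,ℓ₂})`. -/
theorem biUnion_B_eq (d k : ℕ)
    (S : Fin (2 ^ k - 1) → Finset (Fin k))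
    (hSinj : Function.Injective S)
    (hSne : ∀ ℓ, (S ℓ).Nonempty)
    (hSsurj : ∀ T : Finset (Fin k), T.Nonempty → ∃ ℓ, S ℓ = T)
    (D : Finset (Fin k) → Finset (Fin d))
    (ℓ : Fin (2 ^ k - 1)) :
    (S ℓ).biUnion (Bset S D) =
      ((S ℓ).biUnion fun i => Eset S D i (ℓ : ℕ)) ∪
      ((S ℓ).biUnion fun i =>
        (Finset.univ.filter fun p : Fin (2 ^ k - 1) × Fin (2 ^ k - 1) =>
            ℓ ≤ p.1 ∧ p.1 < p.2 ∧ i ∈ S p.1 ∧ i ∈ S p.2).biUnion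
          fun p => Fset S D i p.1 p.2) := by
  ext x
  simp only [mem_union, mem_biUnion, mem_filter, mem_univ, true_and, Prod.exists]
  constructor
  · rintro ⟨i, hi, hx⟩
    rcases mem_Bset.1 hx with hx | ⟨ℓ₁, ℓ₂, hp, hx⟩
    · exact Or.inl ⟨i, hi, Eset_mono S D i (Nat.zero_le _) hx⟩
    · rcases le_or_gt ℓ ℓ₁ with h | h
      · exact Or.inr ⟨i, hi, ℓ₁, ℓ₂, ⟨h, hp⟩, hx⟩
      · exact Or.inl ⟨i, hi, Eset_mono S D i (Nat.succ_le_of_lt h) (mem_sdiff.1 hx).1⟩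
  · rintro (h | ⟨i, hi, ℓ₁, ℓ₂, hp, hx⟩)
    · exact exists_mem_Bset le_rfl h
    · exact ⟨i, hi, mem_Bset.2 (Or.inr ⟨ℓ₁, ℓ₂, hp.2, hx⟩)⟩
end
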